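/- arXiv:1007.3771 — 2 statements merged into one kernel-verified Lean document; each statement's English description precedes it below -/
import Mathlib

section
/- Let (M, d) be a metric space and 𝒞 ⊆ M a nonempty set. Fix α ∈ (0,1] and k > 0 and define φ_{0,k}(x) := min( −log dist(x, 𝒞), k ) for x with dist(x, 𝒞) > 0. Then for all x, y ∈ M with dist(x,𝒞) > 0 and dist(y,𝒞) > 0, | φ_{0,k}(x) − φ_{0,k}(y) | ≤ α^{−1} · e^{α k} · d(x, y)^{α}. In particular, the α-Hölder seminorm of the truncated function φ_{0,k} is at most α^{−1} e^{α k}. -/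
/-!
Truncating `-log s` at level `k` is the same as replacing `s` by `max s (exp (-k))`, so it suffices
to bound the logarithm on `[exp (-k), ∞)`. For `0 < u ≤ v` the inequality `log t ≤ t - 1` at
`t = (v / u) ^ α`, followed by subadditivity of `s ↦ s ^ α` (which uses `α ≤ 1`), gives
`α * (log v - log u) ≤ (v ^ α - u ^ α) / u ^ α ≤ (v - u) ^ α / u ^ α`, and
`u ^ α ≥ exp (-α k)`. The conclusion follows since `s ↦ max s (exp (-k))` and
`x ↦ infDist x 𝒞` are both `1`-Lipschitz.
-/

open Metric

theorem min_neg_log_eq (s k : ℝ) (hs : 0 < s) :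
    min (-Real.log s) k = -Real.log (max s (Real.exp (-k))) := by
  rcases le_total s (Real.exp (-k)) with h | h
  · have h1 := Real.log_le_log hs h
    rw [Real.log_exp] at h1
    rw [max_eq_right h, Real.log_exp, neg_neg, min_eq_right (by linarith)]
  · have h1 := Real.log_le_log (Real.exp_pos _) h
    rw [Real.log_exp] at h1
    rw [max_eq_left h, min_eq_left (by linarith)]

theorem log_sub_log_le_of_exp_neg_le (α k u v : ℝ) (hα0 : 0 < α) (hα1 : α ≤ 1)
    (hu : Real.exp (-k) ≤ u) (huv : u ≤ v) :
    Real.log v - Real.log u ≤ α⁻¹ * Real.exp (α * k) * (v - u) ^ α := by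
  have hu0 : 0 < u := (Real.exp_pos _).trans_le hu
  have hv0 : 0 < v := hu0.trans_le huv
  have hd : 0 ≤ v - u := sub_nonneg.2 huv
  have hsub : v ^ α ≤ u ^ α + (v - u) ^ α := by
    simpa using Real.rpow_add_le_add_rpow hu0.le hd hα0.le hα1
  have hlog : α * (Real.log v - Real.log u) ≤ v ^ α / u ^ α - 1 := by
    have h := Real.log_le_sub_one_of_pos
      (div_pos (Real.rpow_pos_of_pos hv0 α) (Real.rpow_pos_of_pos hu0 α))
    rw [Real.log_div (Real.rpow_pos_of_pos hv0 α).ne' (Real.rpow_pos_of_pos hu0 α).ne',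
      Real.log_rpow hv0, Real.log_rpow hu0] at h
    linarith
  have hlow : 1 ≤ Real.exp (α * k) * u ^ α := by
    have h := Real.rpow_le_rpow (Real.exp_pos _).le hu hα0.le
    rw [← Real.exp_mul] at h
    calc (1 : ℝ) = Real.exp (α * k) * Real.exp (-k * α) := by
          rw [← Real.exp_add, show α * k + -k * α = 0 by ring, Real.exp_zero]
      _ ≤ _ := by gcongr
  have hquot : v ^ α / u ^ α - 1 ≤ Real.exp (α * k) * (v - u) ^ α := by
    have hp := Real.rpow_pos_of_pos hu0 α
    rw [sub_le_iff_le_add, div_le_iff₀ hp]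
    nlinarith [mul_le_mul_of_nonneg_right hlow (Real.rpow_nonneg hd α)]
  rw [mul_assoc, inv_mul_eq_div, le_div_iff₀ hα0]
  linarith

theorem abs_log_sub_log_le_of_exp_neg_le (α k u v : ℝ) (hα0 : 0 < α) (hα1 : α ≤ 1)
    (hu : Real.exp (-k) ≤ u) (hv : Real.exp (-k) ≤ v) :
    |Real.log v - Real.log u| ≤ α⁻¹ * Real.exp (α * k) * |v - u| ^ α := by
  wlog huv : u ≤ v generalizing u v
  · rw [abs_sub_comm, abs_sub_comm v]
    exact this v u hv hu (le_of_not_ge huv)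
  have hlog := Real.log_le_log ((Real.exp_pos _).trans_le hu) huv
  rw [abs_of_nonneg (sub_nonneg.2 hlog), abs_of_nonneg (sub_nonneg.2 huv)]
  exact log_sub_log_le_of_exp_neg_le α k u v hα0 hα1 hu huv

/-- The truncation at level `k` of `−log dist(·,𝒞)` is `α`-Hölder with
constant `α⁻¹ e^{αk}`. -/
theorem truncated_log_distance_holder
    {M : Type*} [MetricSpace M]
    (𝒞 : Set M) (h𝒞 : 𝒞.Nonempty)
    (α k : ℝ) (hα0 : 0 < α) (hα1 : α ≤ 1) (hk : 0 < k) :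
    ∀ x y : M, 0 < infDist x 𝒞 → 0 < infDist y 𝒞 →
      |min (-Real.log (infDist x 𝒞)) k - min (-Real.log (infDist y 𝒞)) k|
        ≤ α⁻¹ * Real.exp (α * k) * dist x y ^ α := by
  intro x y hx hy
  have hdist : |max (infDist y 𝒞) (Real.exp (-k)) - max (infDist x 𝒞) (Real.exp (-k))|
      ≤ dist x y := by
    refine (abs_max_sub_max_le_abs _ _ _).trans ?_
    rw [dist_comm, ← Real.dist_eq]
    simpa using (lipschitz_infDist_pt 𝒞).dist_le_mul y x
  rw [min_neg_log_eq _ k hx, min_neg_log_eq _ k hy, neg_sub_neg]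
  refine (abs_log_sub_log_le_of_exp_neg_le α k _ _ hα0 hα1
    (le_max_right _ _) (le_max_right _ _)).trans ?_
  gcongr
end

section
/- Let (M, d) be a metric space with Borel σ-algebra, μ a Borel probability measure, and f : M → M measurable with f_*μ = μ. Let φ : M → [0,∞) be measurable and μ-integrable, and for k > 0 set φ_k := min(φ, k). Fix β > 1, q > max{1, β}, a constant D > 0, and a constant ζ > 0, and suppose: (i) μ{ x : φ(x) ≥ k } ≤ D · e^{−ζ k} for all k > 0; (ii) for every α ∈ (0,1] and k > 0 the function φ_k is bounded α-Hölder with Hölder norm ‖φ_k‖_{H_α} ≤ D · α^{−1} · k · e^{α k}; (iii) for every α ∈ (0,1] there is C_α > 0 such that for every bounded α-Hölder ψ, every ε > 0 and every n ≥ 1, μ{ |Sₙψ/n − ∫ψ dμ| > ε } ≤ C_α · ‖ψ‖_{H_α} · ‖ψ‖_∞^{2q−1} · ε^{−2q} · n^{−β}. Then for every γ > 0 and every ε > 0 there exists C' > 0 such that for all n ≥ 1, μ{ x : |(1/n)·Σ_{i=0}^{n−1} φ(fⁱx) − ∫ φ dμ| > ε } ≤ C' · n^{−β + γ}. -/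
/-!
The proof truncates `φ` at a level growing logarithmically in `n`. For a level `k`, an orbit segment
of length `n` either meets `{k ≤ φ}`, which by invariance has probability at most
`n * μ {k ≤ φ}`, or its Birkhoff sums for `φ` and `φ_k = min φ k` agree. Once `∫ φ_k` is
`ε / 2`-close to `∫ φ`, the deviation of `φ` by `ε` forces a deviation of `φ_k` by `ε / 2`
(`measure_deviation_le_truncation`).

With `k = A * log n` and `A = (β + 1) / ζ` the tail term is at most `D * n ^ (-β)`, while the
large deviation bound for `φ_k` is a constant times `k ^ (2 * q) * exp (α * k) * n ^ (-β)`. Choosing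
`α ≤ γ / (2 * A)` makes `exp (α * k) ≤ n ^ (γ / 2)`, and `k ^ (2 * q)`, a power of a logarithm, is
`O (n ^ (γ / 2))`. The finitely many `n` for which `k` is too small are absorbed in the constant.
-/

open MeasureTheory Filter
open scoped ENNReal Topology

/-- The sup norm `‖ψ‖_∞ = ⨆ x, |ψ x|` of a function. -/
noncomputable def supNorm {M : Type*} (ψ : M → ℝ) : ℝ := ⨆ x, |ψ x|

/-- The `α`-Hölder seminorm `sup_{x ≠ y} |ψ(x) − ψ(y)| / d(x,y)^α`. -/
noncomputable def holderSeminorm {M : Type*} [MetricSpace M] (α : ℝ) (ψ : M → ℝ) : ℝ :=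
  ⨆ p : {p : M × M // p.1 ≠ p.2}, |ψ (p : M × M).1 - ψ (p : M × M).2| / dist (p : M × M).1 (p : M × M).2 ^ α

/-- The `α`-Hölder norm `‖ψ‖_{H_α} = ‖ψ‖_∞ + sup_{x≠y} |ψ(x)−ψ(y)|/d(x,y)^α`. -/
noncomputable def holderNorm {M : Type*} [MetricSpace M] (α : ℝ) (ψ : M → ℝ) : ℝ :=
  supNorm ψ + holderSeminorm α ψ

/-- `ψ` is bounded `α`-Hölder: both suprema defining `‖ψ‖_{H_α}` are finite. -/
def BoundedHolder {M : Type*} [MetricSpace M] (α : ℝ) (ψ : M → ℝ) : Prop :=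
  BddAbove (Set.range fun x => |ψ x|) ∧
  BddAbove (Set.range fun p : {p : M × M // p.1 ≠ p.2} =>
    |ψ (p : M × M).1 - ψ (p : M × M).2| / dist (p : M × M).1 (p : M × M).2 ^ α)

/-- The means of the truncations converge to the mean, by dominated convergence. -/
lemma tendsto_integral_truncation {M : Type*} [MeasurableSpace M] {μ : Measure M}
    {φ : M → ℝ} (hφ_nonneg : ∀ x, 0 ≤ φ x) (hφint : Integrable φ μ) :
    Tendsto (fun k : ℝ => ∫ x, min (φ x) k ∂μ) atTop (𝓝 (∫ x, φ x ∂μ)) := by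
  refine tendsto_integral_filter_of_dominated_convergence φ
    (Eventually.of_forall fun k =>
      (hφint.aestronglyMeasurable.aemeasurable.min aemeasurable_const).aestronglyMeasurable)
    ?_ hφint (Eventually.of_forall fun x => ?_)
  · filter_upwards [eventually_ge_atTop 0] with k hk
    refine Eventually.of_forall fun x => ?_
    rw [Real.norm_of_nonneg (le_min (hφ_nonneg x) hk)]
    exact min_le_left _ _
  · refine tendsto_const_nhds.congr' ?_
    filter_upwards [eventually_ge_atTop (φ x)] with k hk
    rw [min_eq_left hk]

/-- Truncation step: up to the event that the orbit segment visits `{k ≤ φ}`, a deviation of `φ`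
by `ε` is a deviation of `min φ k` by `ε / 2`. -/
lemma measure_deviation_le_truncation {M : Type*} [MeasurableSpace M] {μ : Measure M}
    {f : M → M} (hf : MeasurePreserving f μ μ) {φ : M → ℝ} (hφm : Measurable φ)
    {ε k : ℝ} (n : ℕ) (hk : |∫ x, min (φ x) k ∂μ - ∫ x, φ x ∂μ| ≤ ε / 2) :
    μ {x | ε < |(n : ℝ)⁻¹ * ∑ i ∈ Finset.range n, φ (f^[i] x) - ∫ x, φ x ∂μ|}
      ≤ n * μ {x | k ≤ φ x}
        + μ {x | ε / 2 <
          |(n : ℝ)⁻¹ * ∑ i ∈ Finset.range n, min (φ (f^[i] x)) k - ∫ x, min (φ x) k ∂μ|} := by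
  have hvisit : μ (⋃ i ∈ Finset.range n, f^[i] ⁻¹' {x | k ≤ φ x}) ≤ n * μ {x | k ≤ φ x} := by
    refine (measure_biUnion_finset_le _ _).trans_eq ?_
    rw [Finset.sum_congr rfl fun i _ => (hf.iterate i).measure_preimage
      (measurableSet_le measurable_const hφm).nullMeasurableSet]
    simp
  refine le_trans (measure_mono ?_) ((measure_union_le _ _).trans (add_le_add_left hvisit _))
  intro x hx
  by_cases hv : x ∈ ⋃ i ∈ Finset.range n, f^[i] ⁻¹' {x | k ≤ φ x}
  · exact Or.inl hv
  · right
    simp only [Set.mem_iUnion, Set.mem_preimage, Set.mem_ofPred_eq, not_exists, not_le] at hv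
    rw [Set.mem_ofPred_eq] at hx ⊢
    rw [Finset.sum_congr rfl fun i hi => min_eq_left (hv i hi).le]
    have := abs_sub_le ((n : ℝ)⁻¹ * ∑ i ∈ Finset.range n, φ (f^[i] x))
      (∫ x, min (φ x) k ∂μ) (∫ x, φ x ∂μ)
    linarith

lemma supNorm_truncation_le {M : Type*} {φ : M → ℝ} (hφ_nonneg : ∀ x, 0 ≤ φ x) {k : ℝ}
    (hk : 0 ≤ k) : supNorm (fun x => min (φ x) k) ≤ k := by
  refine Real.iSup_le (fun x => ?_) hk
  rw [abs_of_nonneg (le_min (hφ_nonneg x) hk)]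
  exact min_le_right _ _

lemma supNorm_nonneg {M : Type*} (ψ : M → ℝ) : 0 ≤ supNorm ψ :=
  Real.iSup_nonneg fun _ => abs_nonneg _

/-- At the level `k = A * log x`, the factor `k * exp (α * k) * k ^ (2 * q - 1)` in the large
deviation bound costs only `x ^ γ` when `α ≤ γ / (2 * A)`. -/
lemma log_level_le_rpow {A α γ q x : ℝ} (hA : 0 < A) (hγ : 0 < γ) (hq : 0 < q)
    (hα : α ≤ γ / (2 * A)) (hx : 1 < x) :
    A * Real.log x * Real.exp (α * (A * Real.log x)) * (A * Real.log x) ^ (2 * q - 1)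
      ≤ (A / (γ / (4 * q))) ^ (2 * q) * x ^ γ := by
  have hx0 : 0 < x := by linarith
  have hlog : 0 < Real.log x := Real.log_pos hx
  have hk : 0 < A * Real.log x := by positivity
  have hexp : Real.exp (α * (A * Real.log x)) ≤ x ^ (γ / 2) := by
    rw [Real.rpow_def_of_pos hx0, Real.exp_le_exp]
    have : α * A ≤ γ / 2 := by
      calc α * A ≤ γ / (2 * A) * A := by gcongr
        _ = γ / 2 := by field_simp
    nlinarith
  have hpow : (A * Real.log x) ^ (2 * q) ≤ (A / (γ / (4 * q))) ^ (2 * q) * x ^ (γ / 2) := by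
    have hle : A * Real.log x ≤ A / (γ / (4 * q)) * x ^ (γ / (4 * q)) := by
      have := Real.log_le_rpow_div hx0.le (show 0 < γ / (4 * q) by positivity)
      calc A * Real.log x ≤ A * (x ^ (γ / (4 * q)) / (γ / (4 * q))) := by gcongr
        _ = _ := by ring
    calc (A * Real.log x) ^ (2 * q)
        ≤ (A / (γ / (4 * q)) * x ^ (γ / (4 * q))) ^ (2 * q) := by gcongr
      _ = _ := by
        rw [Real.mul_rpow (by positivity) (by positivity), ← Real.rpow_mul hx0.le]
        congr 2
        field_simp
        norm_num
  have hsplit : (A * Real.log x) ^ (2 * q) = A * Real.log x * (A * Real.log x) ^ (2 * q - 1) := by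
    rw [Real.rpow_sub_one hk.ne']
    field_simp
  calc A * Real.log x * Real.exp (α * (A * Real.log x)) * (A * Real.log x) ^ (2 * q - 1)
      = (A * Real.log x) ^ (2 * q) * Real.exp (α * (A * Real.log x)) := by rw [hsplit]; ring
    _ ≤ ((A / (γ / (4 * q))) ^ (2 * q) * x ^ (γ / 2)) * x ^ (γ / 2) := by gcongr
    _ = _ := by
      rw [mul_assoc, ← Real.rpow_add hx0, add_halves]

/-- Polynomial large deviation estimates for bounded Hölder observables, together with
an exponential tail and a Hölder bound for the truncations `φ_k = min(φ,k)`, yield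
polynomial large deviations (with an arbitrarily small loss `γ`) for the unbounded
observable `φ`. -/
theorem poly_large_deviations_for_unbounded_observable
    {M : Type*} [MetricSpace M] [MeasurableSpace M] [BorelSpace M]
    (μ : Measure M) [IsProbabilityMeasure μ]
    (f : M → M) (hf : MeasurePreserving f μ μ)
    (φ : M → ℝ) (hφm : Measurable φ) (hφ_nonneg : ∀ x, 0 ≤ φ x)
    (hφint : Integrable φ μ)
    (β q D ζ : ℝ) (hβ : 1 < β) (hq : max 1 β < q) (hD : 0 < D) (hζ : 0 < ζ)
    (htail : ∀ k : ℝ, 0 < k → μ {x | k ≤ φ x} ≤ ENNReal.ofReal (D * Real.exp (-ζ * k)))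
    (hhold : ∀ α : ℝ, 0 < α → α ≤ 1 → ∀ k : ℝ, 0 < k →
      BoundedHolder α (fun x => min (φ x) k) ∧
      holderNorm α (fun x => min (φ x) k) ≤ D * α⁻¹ * k * Real.exp (α * k))
    (hld : ∀ α : ℝ, 0 < α → α ≤ 1 → ∃ Cα > 0, ∀ ψ : M → ℝ, BoundedHolder α ψ →
      ∀ ε > 0, ∀ n : ℕ, 1 ≤ n →
        μ {x | ε < |(n : ℝ)⁻¹ * ∑ i ∈ Finset.range n, ψ (f^[i] x) - ∫ x, ψ x ∂μ|}
          ≤ ENNReal.ofReal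
              (Cα * holderNorm α ψ * supNorm ψ ^ (2 * q - 1) * ε ^ (-(2 * q))
                * (n : ℝ) ^ (-β))) :
    ∀ γ > 0, ∀ ε > 0, ∃ C' > 0, ∀ n : ℕ, 1 ≤ n →
      μ {x | ε < |(n : ℝ)⁻¹ * ∑ i ∈ Finset.range n, φ (f^[i] x) - ∫ x, φ x ∂μ|}
        ≤ ENNReal.ofReal (C' * (n : ℝ) ^ (-β + γ)) := by
  intro γ hγ ε hε
  have hβ0 : 0 < β := by linarith
  have hq1 : 1 < q := (le_max_left 1 β).trans_lt hq
  -- This slope makes `n * exp (-ζ * A * log n) = n ^ (-β)`.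
  obtain ⟨A, hA, hAζ⟩ : ∃ A : ℝ, 0 < A ∧ ζ * A = β + 1 :=
    ⟨(β + 1) / ζ, by positivity, by field_simp⟩
  obtain ⟨α, hα, hα1, hαA⟩ : ∃ α : ℝ, 0 < α ∧ α ≤ 1 ∧ α ≤ γ / (2 * A) :=
    ⟨min 1 (γ / (2 * A)), by positivity, min_le_left _ _, min_le_right _ _⟩
  obtain ⟨Cα, hCα, hld⟩ := hld α hα hα1
  have hklim : Tendsto (fun n : ℕ => A * Real.log n) atTop atTop :=
    (Real.tendsto_log_atTop.comp tendsto_natCast_atTop_atTop).const_mul_atTop hA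
  have hmean : ∀ᶠ n : ℕ in atTop,
      |∫ x, min (φ x) (A * Real.log n) ∂μ - ∫ x, φ x ∂μ| ≤ ε / 2 := by
    have := ((tendsto_integral_truncation hφ_nonneg hφint).comp hklim).eventually
      (Metric.closedBall_mem_nhds _ (half_pos hε))
    filter_upwards [this] with n hn
    simpa [Metric.mem_closedBall, Real.dist_eq] using hn
  obtain ⟨N, hN⟩ := eventually_atTop.1 hmean
  set B : ℝ := (A / (γ / (4 * q))) ^ (2 * q) with hB
  set C₂ : ℝ := Cα * (D * α⁻¹) * B * (ε / 2) ^ (-(2 * q)) with hC₂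
  have hB0 : 0 < B := by positivity
  have hC₂0 : 0 < C₂ := by positivity
  refine ⟨D + C₂ + ((N : ℝ) + 2) ^ β, by positivity, fun n hn => ?_⟩
  have hn1 : (1 : ℝ) ≤ n := by exact_mod_cast hn
  have hn0 : (0 : ℝ) < n := by linarith
  have hmono : (n : ℝ) ^ (-β) ≤ (n : ℝ) ^ (-β + γ) :=
    Real.rpow_le_rpow_of_exponent_le hn1 (by linarith)
  rcases lt_or_ge n (N + 2) with hsmall | hlarge
  · -- For small `n` the right-hand side is at least `1`.
    refine prob_le_one.trans ?_
    rw [← ENNReal.ofReal_one]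
    refine ENNReal.ofReal_le_ofReal ?_
    have hnN : (n : ℝ) ≤ (N : ℝ) + 2 := by exact_mod_cast hsmall.le
    calc (1 : ℝ) = (n : ℝ) ^ β * (n : ℝ) ^ (-β) := by
          rw [← Real.rpow_add hn0, add_neg_cancel, Real.rpow_zero]
      _ ≤ ((N : ℝ) + 2) ^ β * (n : ℝ) ^ (-β + γ) := by gcongr
      _ ≤ (D + C₂ + ((N : ℝ) + 2) ^ β) * (n : ℝ) ^ (-β + γ) := by
          gcongr
          linarith
  · have hn2 : (1 : ℝ) < n := by exact_mod_cast (show 1 < n by omega)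
    have hlog : 0 < Real.log n := Real.log_pos hn2
    have hk : 0 < A * Real.log n := by positivity
    have htail' : (n : ENNReal) * μ {x | A * Real.log n ≤ φ x}
        ≤ ENNReal.ofReal (D * (n : ℝ) ^ (-β + γ)) := by
      rw [← ENNReal.ofReal_natCast]
      refine (mul_le_mul_right (htail _ hk) _).trans ?_
      rw [← ENNReal.ofReal_mul hn0.le]
      refine ENNReal.ofReal_le_ofReal ?_
      have hexp : Real.exp (-ζ * (A * Real.log n)) = (n : ℝ) ^ (-β - 1) := by
        rw [Real.rpow_def_of_pos hn0]
        congr 1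
        linear_combination (-Real.log n) * hAζ
      calc (n : ℝ) * (D * Real.exp (-ζ * (A * Real.log n))) = D * (n : ℝ) ^ (-β) := by
            rw [hexp, Real.rpow_sub_one hn0.ne']
            field_simp
        _ ≤ _ := by gcongr
    have hdev := hld _ (hhold α hα hα1 _ hk).1 (ε / 2) (half_pos hε) n hn
    refine (measure_deviation_le_truncation hf hφm n (hN n (by omega))).trans
      ((add_le_add htail' hdev).trans ?_)
    have hmain : Cα * holderNorm α (fun x => min (φ x) (A * Real.log n))
          * supNorm (fun x => min (φ x) (A * Real.log n)) ^ (2 * q - 1)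
          * (ε / 2) ^ (-(2 * q)) * (n : ℝ) ^ (-β) ≤ C₂ * (n : ℝ) ^ (-β + γ) := by
      have hH := (hhold α hα hα1 _ hk).2
      have hS := Real.rpow_le_rpow (supNorm_nonneg _) (supNorm_truncation_le hφ_nonneg hk.le)
        (show 0 ≤ 2 * q - 1 by linarith)
      have hS0 := Real.rpow_nonneg (supNorm_nonneg fun x => min (φ x) (A * Real.log n)) (2 * q - 1)
      have hlevel := log_level_le_rpow hA hγ (by linarith : 0 < q) hαA hn2
      calc _ ≤ Cα * (D * α⁻¹ * (A * Real.log n) * Real.exp (α * (A * Real.log n)))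
              * (A * Real.log n) ^ (2 * q - 1) * (ε / 2) ^ (-(2 * q)) * (n : ℝ) ^ (-β) := by
            gcongr
        _ = Cα * (D * α⁻¹) * (A * Real.log n * Real.exp (α * (A * Real.log n))
              * (A * Real.log n) ^ (2 * q - 1)) * (ε / 2) ^ (-(2 * q)) * (n : ℝ) ^ (-β) := by
            ring
        _ ≤ Cα * (D * α⁻¹) * (B * (n : ℝ) ^ γ) * (ε / 2) ^ (-(2 * q)) * (n : ℝ) ^ (-β) := by
            gcongr
        _ = C₂ * (n : ℝ) ^ (-β + γ) := by
            rw [Real.rpow_add hn0, hC₂]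
            ring
    refine (add_le_add_right (ENNReal.ofReal_le_ofReal hmain) _).trans ?_
    rw [← ENNReal.ofReal_add (by positivity) (by positivity)]
    refine ENNReal.ofReal_le_ofReal ?_
    rw [← add_mul]
    refine mul_le_mul_of_nonneg_right ?_ (by positivity)
    have : 0 ≤ ((N : ℝ) + 2) ^ β := by positivity
    linarith
end
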